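/- If in the graph H of the paths construction some paths solution T is reachable from the initial configuration S within the budget b = 2n(κ−1)κ token slides in the discovery token sliding model, then the Multicolored Clique instance (G, κ) is a yes-instance. -/

import Mathlib

namespace TokenDiscovery

variable {V : Type*} {α : Type*}

/-- One token slide in the discovery token sliding model: exactly one token
moves from its current vertex to an adjacent vertex (several tokens may share
a vertex during the transformation).  A configuration assigns to every token
(indexed by `α`) its current vertex. -/
def Step (G : SimpleGraph V) (c c' : α → V) : Prop :=
  ∃ i : α, G.Adj (c i) (c' i) ∧ ∀ j : α, j ≠ i → c' j = c j

/-- `T` is reachable from the initial configuration `c₀` within at most `b`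
token slides in the discovery token sliding model: some transformation
sequence of at most `b` token slides moves the tokens from `c₀` to a
configuration with exactly one token on each vertex of `T`. -/
def Reachable (G : SimpleGraph V) (c₀ : α → V) (T : Set V) (b : ℕ) : Prop :=
  ∃ (m : ℕ) (f : ℕ → α → V), m ≤ b ∧ f 0 = c₀ ∧
    (∀ i : ℕ, i < m → Step G (f i) (f (i + 1))) ∧
    Function.Injective (f m) ∧ Set.range (f m) = T

/-- `T` is reachable from `c₀` within at most `b` token slides in the
(plain) token sliding model: at every moment the tokens occupy pairwise
distinct vertices, and each token slide moves one token along an edge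
(necessarily to an unoccupied vertex, since configurations stay injective). -/
def SlidingReachable (G : SimpleGraph V) (c₀ : α → V) (T : Set V) (b : ℕ) : Prop :=
  ∃ (m : ℕ) (f : ℕ → α → V), m ≤ b ∧ f 0 = c₀ ∧
    (∀ i : ℕ, i ≤ m → Function.Injective (f i)) ∧
    (∀ i : ℕ, i < m → Step G (f i) (f (i + 1))) ∧
    Set.range (f m) = T

end TokenDiscovery

namespace PathsConstruction

/-- Pre-nodes of the paths construction obtained from a Multicolored Clique
instance with `κ` color classes of `n` vertices each.  The vertex `x` of class
`i` is the pair `(i, x) : Fin κ × Fin n`, and its index is `ι(i, x) = x + 1`. -/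
inductive PreNode (κ n : ℕ) : Type
  /-- the teal vertex block node `b_i` -/
  | vblock (i : Fin κ)
  /-- the `p`-th node (for `p < n(κ−1)`) of the path vertex-gadget for `(i, x)` -/
  | vnode (i : Fin κ) (x : Fin n) (p : ℕ)
  /-- the gray edge block node `b_{i,j}` (for `i < j`) -/
  | eblock (i j : Fin κ)
  /-- the `p`-th node (for `p < 2n`) of the path edge-gadget for the edge `(i,x)(j,y)` -/
  | enode (i j : Fin κ) (x y : Fin n) (p : ℕ)
  /-- green connector node for the pair `{i, j}` (with `i < j`); `fromSecond`
  tells whether it is the connector from color `j` (rather than from color `i`),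
  and `isIndex` whether it is the index (rather than the remainder) connector -/
  | conn (i j : Fin κ) (fromSecond : Bool) (isIndex : Bool)

variable {κ n : ℕ}

/-- The index (`isIndex = true`) or remainder (`isIndex = false`) connector
node from color `i` to the pair `{i, j}`. -/
def connFor (i j : Fin κ) (isIndex : Bool) : PreNode κ n :=
  if i < j then PreNode.conn i j false isIndex else PreNode.conn j i true isIndex

variable (G : SimpleGraph (Fin κ × Fin n))

/-- The pre-nodes actually present in the paths construction for the
Multicolored Clique instance `G`. -/
def Valid : PreNode κ n → Prop
  | PreNode.vblock _ => True
  | PreNode.vnode _ _ p => p < n * (κ - 1)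
  | PreNode.eblock i j => i < j
  | PreNode.enode i j x y p => i < j ∧ G.Adj (i, x) (j, y) ∧ p < 2 * n
  | PreNode.conn i j _ _ => i < j

/-- Nodes of the paths construction. -/
abbrev Node := {w : PreNode κ n // Valid G w}

/-- The class corresponding to the `g`-th group (0-based) of a path
vertex-gadget of the vertex-block for `i`: the groups enumerate the classes
different from `i` in increasing order. -/
def classOfGroup (i : Fin κ) (g : ℕ) : ℕ := if g < (i : ℕ) then g else g + 1

/-- The base adjacency relation of the paths construction (to be symmetrized).
Within the group of a path vertex-gadget (or the half of a path edge-gadget)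
corresponding to a vertex of index `ι = x + 1`, the first `ι` nodes go to the
index connector and the remaining `n − ι` nodes go to the remainder
connector. -/
def Rel : PreNode κ n → PreNode κ n → Prop := fun a b =>
  (∃ i x p, a = PreNode.vnode i x p ∧ b = PreNode.vnode i x (p + 1)) ∨
  (∃ i x p, a = PreNode.vnode i x p ∧ b = PreNode.vblock i) ∨
  (∃ (i : Fin κ) (x : Fin n) (p : ℕ) (j : Fin κ), (j : ℕ) = classOfGroup i (p / n) ∧
      p % n ≤ (x : ℕ) ∧ a = PreNode.vnode i x p ∧ b = connFor i j true) ∨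
  (∃ (i : Fin κ) (x : Fin n) (p : ℕ) (j : Fin κ), (j : ℕ) = classOfGroup i (p / n) ∧
      (x : ℕ) < p % n ∧ a = PreNode.vnode i x p ∧ b = connFor i j false) ∨
  (∃ i j x y p, a = PreNode.enode i j x y p ∧ b = PreNode.enode i j x y (p + 1)) ∨
  (∃ i j x y p, a = PreNode.enode i j x y p ∧ b = PreNode.eblock i j) ∨
  (∃ (i j : Fin κ) (x y : Fin n) (p : ℕ), p ≤ (x : ℕ) ∧
      a = PreNode.enode i j x y p ∧ b = connFor i j true) ∨
  (∃ (i j : Fin κ) (x y : Fin n) (p : ℕ), (x : ℕ) < p ∧ p < n ∧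
      a = PreNode.enode i j x y p ∧ b = connFor i j false) ∨
  (∃ (i j : Fin κ) (x y : Fin n) (p : ℕ), n ≤ p ∧ p - n ≤ (y : ℕ) ∧
      a = PreNode.enode i j x y p ∧ b = connFor j i true) ∨
  (∃ (i j : Fin κ) (x y : Fin n) (p : ℕ), n ≤ p ∧ (y : ℕ) < p - n ∧
      a = PreNode.enode i j x y p ∧ b = connFor j i false)

/-- The graph `H` of the paths construction. -/
def H : SimpleGraph (Node G) := SimpleGraph.fromRel (fun a b => Rel a.1 b.1)

/-- The initial configuration: all nodes of all path vertex-gadgets. -/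
def initialS : Set (Node G) := {w | ∃ i x p, w.1 = PreNode.vnode i x p}

/-- The nodes of the path vertex-gadget for the vertex `(i, x)`. -/
def vertexGadgetNodes (i : Fin κ) (x : Fin n) : Set (Node G) :=
  {w | ∃ p, w.1 = PreNode.vnode i x p}

/-- The nodes of the path edge-gadget for the edge `(i,x)(j,y)`. -/
def edgeGadgetNodes (i j : Fin κ) (x y : Fin n) : Set (Node G) :=
  {w | ∃ p, w.1 = PreNode.enode i j x y p}

/-- The gadget nodes: the nodes of all path vertex-gadgets and path
edge-gadgets (that is, all non-block non-connector nodes). -/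
def gadgetNodes : Set (Node G) :=
  {w | (∃ i x p, w.1 = PreNode.vnode i x p) ∨ ∃ i j x y p, w.1 = PreNode.enode i j x y p}

/-- A paths solution: a set `T` of nodes with `|T| = |S|` satisfying
conditions (P1)–(P4). -/
def IsPathsSolution (T : Set (Node G)) : Prop :=
  T.ncard = (initialS G).ncard ∧
  -- (P1): no block or connector node is in `T`
  (∀ w ∈ T, w ∈ gadgetNodes G) ∧
  -- (P2): for each `i`, some node of a path vertex-gadget adjacent to `b_i`
  -- is not in `T`
  (∀ i : Fin κ, ∃ w : Node G, (∃ x p, w.1 = PreNode.vnode i x p) ∧ w ∉ T) ∧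
  -- (P3): for each pair `{i,j}`, some node of a path edge-gadget adjacent to
  -- `b_{i,j}` is in `T`
  (∀ i j : Fin κ, i < j → ∃ w : Node G, (∃ x y p, w.1 = PreNode.enode i j x y p) ∧ w ∈ T) ∧
  -- (P4): a gadget node is in `T` iff every gadget node at distance at most
  -- two from it in the subgraph induced by the gadget nodes is in `T`
  (∀ a : ↥(gadgetNodes G), (a : Node G) ∈ T ↔
      ∀ b : ↥(gadgetNodes G),
        (∃ pw : (SimpleGraph.induce (gadgetNodes G) (H G)).Walk a b, pw.length ≤ 2) →
        (b : Node G) ∈ T)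

/-- The Multicolored Clique instance is a yes-instance: there is a clique of
`G` with exactly one vertex from each color class. -/
def MCCYes : Prop :=
  ∃ f : Fin κ → Fin n, ∀ i j : Fin κ, i ≠ j → G.Adj (i, f i) (j, f j)

end PathsConstruction

/-- Every connected component of `K` is a path. -/
def ComponentsArePaths {W : Type*} (K : SimpleGraph W) : Prop :=
  ∀ C : K.ConnectedComponent, ∃ (N : ℕ) (g : Fin N ≃ C.supp),
    ∀ a b : Fin N, K.Adj (g a : W) (g b : W) ↔ ((a : ℕ) + 1 = (b : ℕ) ∨ (b : ℕ) + 1 = (a : ℕ))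

/-- `X` is a modulator to paths of `K`: every connected component of `K − X`
is a path. -/
def IsPathsModulator {W : Type*} (K : SimpleGraph W) (X : Set W) : Prop :=
  ComponentsArePaths (SimpleGraph.induce Xᶜ K)

/-- The modulator to paths number: the minimum size of a modulator to paths. -/
noncomputable def pathsModulatorNumber {W : Type*} (K : SimpleGraph W) : ℕ :=
  sInf {k | ∃ X : Set W, IsPathsModulator K X ∧ X.ncard = k}


namespace PathsConstruction

variable {κ n : ℕ}

theorem connFor_inj {i j i' j' : Fin κ} {b b' : Bool}
    (h : (connFor i j b : PreNode κ n) = connFor i' j' b') : i = i' ∧ j = j' ∧ b = b' := by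
  unfold connFor at h
  split_ifs at h <;> simp_all

/-- Every token travels along a walk; the total length is the number of slides. -/
theorem exists_lengths {V α : Type*} [Fintype α] (K : SimpleGraph V) (f : ℕ → α → V) (m : ℕ)
    (hs : ∀ i : ℕ, i < m → TokenDiscovery.Step K (f i) (f (i + 1))) :
    ∃ l : α → ℕ, ∑ a, l a = m ∧ ∀ a, ∃ w : K.Walk (f 0 a) (f m a), w.length = l a := by
  classical
  induction m with
  | zero => exact ⟨fun _ => 0, by simp, fun a => ⟨SimpleGraph.Walk.nil, rfl⟩⟩
  | succ m ih =>
    obtain ⟨l, hl, hw⟩ := ih (fun i hi => hs i (by omega))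
    obtain ⟨a₀, hadj, hrest⟩ := hs m (by omega)
    refine ⟨fun a => l a + if a = a₀ then 1 else 0, ?_, ?_⟩
    · simp [Finset.sum_add_distrib, hl]
    · intro a
      obtain ⟨w, hw⟩ := hw a
      by_cases ha : a = a₀
      · subst ha
        exact ⟨w.concat hadj, by simp [hw]⟩
      · rw [hrest a ha]
        exact ⟨w, by simp [ha, hw]⟩

theorem finite_node (G : SimpleGraph (Fin κ × Fin n)) : Finite (Node G) := by
  have h : {w : PreNode κ n | Valid G w} ⊆
      (Set.range PreNode.vblock) ∪
      (Set.range fun z : Fin κ × Fin n × Fin (n * (κ - 1)) => PreNode.vnode z.1 z.2.1 z.2.2) ∪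
      (Set.range fun z : Fin κ × Fin κ => PreNode.eblock z.1 z.2) ∪
      (Set.range fun z : Fin κ × Fin κ × Fin n × Fin n × Fin (2 * n) =>
        PreNode.enode z.1 z.2.1 z.2.2.1 z.2.2.2.1 z.2.2.2.2) ∪
      (Set.range fun z : Fin κ × Fin κ × Bool × Bool =>
        PreNode.conn z.1 z.2.1 z.2.2.1 z.2.2.2) := by
    intro w hw
    cases w with
    | vblock i => simp
    | vnode i x p =>
      exact Or.inl (Or.inl (Or.inl (Or.inr ⟨(i, x, ⟨p, hw⟩), rfl⟩)))
    | eblock i j => exact Or.inl (Or.inl (Or.inr ⟨(i, j), rfl⟩))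
    | enode i j x y p => exact Or.inl (Or.inr ⟨(i, j, x, y, ⟨p, hw.2.2⟩), rfl⟩)
    | conn i j s b => exact Or.inr ⟨(i, j, s, b), rfl⟩
  exact ((((((Set.finite_range _).union (Set.finite_range _)).union (Set.finite_range _)).union
    (Set.finite_range _)).union (Set.finite_range _)).subset h).to_subtype

/-- Neighbours of vertex-gadget nodes. -/
theorem adj_vnode {G : SimpleGraph (Fin κ × Fin n)} {u w : Node G} {i : Fin κ} {x : Fin n} {p : ℕ}
    (hu : u.1 = PreNode.vnode i x p) (h : (H G).Adj u w) :
    (∃ q, w.1 = PreNode.vnode i x q) ∨ w.1 = PreNode.vblock i ∨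
    ∃ j : Fin κ, (j : ℕ) = classOfGroup i (p / n) ∧
      w.1 = connFor i j (decide (p % n ≤ (x : ℕ))) := by
  obtain ⟨u, hu'⟩ := u
  obtain ⟨w, hw'⟩ := w
  simp only at hu
  subst hu
  simp only [H, SimpleGraph.fromRel_adj, Rel] at h
  obtain ⟨-, h | h⟩ := h
  · rcases h with ⟨i, x, p, h, rfl⟩ | ⟨i, x, p, h, rfl⟩ | ⟨i, x, p, j, hj, hp, h, rfl⟩ |
      ⟨i, x, p, j, hj, hp, h, rfl⟩ | ⟨i, j, x, y, p, h, rfl⟩ | ⟨i, j, x, y, p, h, rfl⟩ |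
      ⟨i, j, x, y, p, _, h, rfl⟩ | ⟨i, j, x, y, p, _, _, h, rfl⟩ |
      ⟨i, j, x, y, p, _, _, h, rfl⟩ | ⟨i, j, x, y, p, _, _, h, rfl⟩ <;> cases h
    · exact Or.inl ⟨_, rfl⟩
    · exact Or.inr (Or.inl rfl)
    · exact Or.inr (Or.inr ⟨j, hj, by simp [hp]⟩)
    · exact Or.inr (Or.inr ⟨j, hj, by simp [not_le.mpr hp]⟩)
  · rcases h with ⟨i, x, p, rfl, h⟩ | ⟨i, x, p, rfl, h⟩ | ⟨i, x, p, j, hj, hp, rfl, h⟩ |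
      ⟨i, x, p, j, hj, hp, rfl, h⟩ | ⟨i, j, x, y, p, rfl, h⟩ | ⟨i, j, x, y, p, rfl, h⟩ |
      ⟨i, j, x, y, p, _, rfl, h⟩ | ⟨i, j, x, y, p, _, _, rfl, h⟩ |
      ⟨i, j, x, y, p, _, _, rfl, h⟩ | ⟨i, j, x, y, p, _, _, rfl, h⟩ <;>
      first
      | (cases h; exact Or.inl ⟨_, rfl⟩)
      | (unfold connFor at h; split_ifs at h)
      | cases h

/-- Neighbours of edge-gadget nodes. -/
theorem adj_enode {G : SimpleGraph (Fin κ × Fin n)} {u w : Node G} {i j : Fin κ} {x y : Fin n}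
    {p : ℕ} (hu : u.1 = PreNode.enode i j x y p) (h : (H G).Adj u w) :
    (∃ q, w.1 = PreNode.enode i j x y q) ∨ w.1 = PreNode.eblock i j ∨
    (p < n ∧ w.1 = connFor i j (decide (p ≤ (x : ℕ)))) ∨
    (n ≤ p ∧ w.1 = connFor j i (decide (p - n ≤ (y : ℕ)))) := by
  obtain ⟨u, hu'⟩ := u
  obtain ⟨w, hw'⟩ := w
  simp only at hu
  subst hu
  simp only [H, SimpleGraph.fromRel_adj, Rel] at h
  obtain ⟨-, h | h⟩ := h
  · rcases h with ⟨i, x, p, h, rfl⟩ | ⟨i, x, p, h, rfl⟩ | ⟨i, x, p, j, hj, hp, h, rfl⟩ |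
      ⟨i, x, p, j, hj, hp, h, rfl⟩ | ⟨i, j, x, y, p, h, rfl⟩ | ⟨i, j, x, y, p, h, rfl⟩ |
      ⟨i, j, x, y, p, h1, h, rfl⟩ | ⟨i, j, x, y, p, h1, h2, h, rfl⟩ |
      ⟨i, j, x, y, p, h1, h2, h, rfl⟩ | ⟨i, j, x, y, p, h1, h2, h, rfl⟩ <;> cases h
    · exact Or.inl ⟨_, rfl⟩
    · exact Or.inr (Or.inl rfl)
    · exact Or.inr (Or.inr (Or.inl ⟨lt_of_le_of_lt h1 x.2, by simp [h1]⟩))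
    · exact Or.inr (Or.inr (Or.inl ⟨h2, by simp [not_le.mpr h1]⟩))
    · exact Or.inr (Or.inr (Or.inr ⟨h1, by simp only [h2, decide_true]⟩))
    · exact Or.inr (Or.inr (Or.inr ⟨h1, by simp only [not_le.mpr h2, decide_false]⟩))
  · rcases h with ⟨i, x, p, rfl, h⟩ | ⟨i, x, p, rfl, h⟩ | ⟨i, x, p, j, hj, hp, rfl, h⟩ |
      ⟨i, x, p, j, hj, hp, rfl, h⟩ | ⟨i, j, x, y, p, rfl, h⟩ | ⟨i, j, x, y, p, rfl, h⟩ |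
      ⟨i, j, x, y, p, _, rfl, h⟩ | ⟨i, j, x, y, p, _, _, rfl, h⟩ |
      ⟨i, j, x, y, p, _, _, rfl, h⟩ | ⟨i, j, x, y, p, _, _, rfl, h⟩ <;>
      first
      | (cases h; exact Or.inl ⟨_, rfl⟩)
      | (unfold connFor at h; split_ifs at h)
      | cases h

/-- A node is an edge-gadget node. -/
def IsE {G : SimpleGraph (Fin κ × Fin n)} (w : Node G) : Prop :=
  ∃ i j x y p, w.1 = PreNode.enode i j x y p

theorem two_le_length {G : SimpleGraph (Fin κ × Fin n)} {u v : Node G} (hu : u ∈ initialS G)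
    (hv : IsE v) (w : (H G).Walk u v) : 2 ≤ w.length := by
  obtain ⟨i, x, p, hu⟩ := hu
  obtain ⟨i', j', x', y', p', hv⟩ := hv
  by_contra hlt
  have h : w.length = 0 ∨ w.length = 1 := by omega
  rcases h with h | h
  · have := SimpleGraph.Walk.eq_of_length_eq_zero h
    rw [this, hv] at hu
    cases hu
  · have := SimpleGraph.Walk.adj_of_length_eq_one h
    rcases adj_vnode hu this with ⟨q, h⟩ | h | ⟨j, _, h⟩
    · rw [hv] at h; cases h
    · rw [hv] at h; cases h
    · rw [hv] at h
      unfold connFor at h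
      split_ifs at h

theorem walk_two {G : SimpleGraph (Fin κ × Fin n)} {u v : Node G}
    {i : Fin κ} {x : Fin n} {p : ℕ} (hu : u.1 = PreNode.vnode i x p)
    {i' j' : Fin κ} {x' y' : Fin n} {p' : ℕ} (hv : v.1 = PreNode.enode i' j' x' y' p')
    (w : (H G).Walk u v) (hw : w.length = 2) :
    ∃ j : Fin κ, (j : ℕ) = classOfGroup i (p / n) ∧
      ((p' < n ∧ i = i' ∧ j = j' ∧ (p % n ≤ (x : ℕ) ↔ p' ≤ (x' : ℕ))) ∨
       (n ≤ p' ∧ i = j' ∧ j = i' ∧ (p % n ≤ (x : ℕ) ↔ p' - n ≤ (y' : ℕ)))) := by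
  cases w with
  | nil => simp at hw
  | @cons _ c _ h1 w =>
    have h2 : (H G).Adj c v :=
      SimpleGraph.Walk.adj_of_length_eq_one (by simpa using hw)
    have A := adj_vnode hu h1
    have B := adj_enode hv h2.symm
    rcases A with ⟨q, hA⟩ | hA | ⟨j, hj, hA⟩
    · rw [hA] at B
      unfold connFor at B
      split_ifs at B <;> simp at B
    · rw [hA] at B
      unfold connFor at B
      split_ifs at B <;> simp at B
    · refine ⟨j, hj, ?_⟩
      rw [hA] at B
      rcases B with ⟨q, hB⟩ | hB | ⟨h, hB⟩ | ⟨h, hB⟩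
      · unfold connFor at hB
        split_ifs at hB
      · unfold connFor at hB
        split_ifs at hB
      · obtain ⟨a, b, c⟩ := connFor_inj hB
        exact Or.inl ⟨h, a, b, by simpa using c⟩
      · obtain ⟨a, b, c⟩ := connFor_inj hB
        exact Or.inr ⟨h, a, b, by simpa only [decide_eq_decide] using c⟩

theorem mem_of_adj {G : SimpleGraph (Fin κ × Fin n)} {T : Set (Node G)}
    (hT : IsPathsSolution G T) {a b : Node G} (hb : b ∈ gadgetNodes G)
    (hab : (H G).Adj a b) (h : a ∈ T) : b ∈ T := by
  obtain ⟨-, P1, -, -, P4⟩ := hT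
  have hadj : (SimpleGraph.induce (gadgetNodes G) (H G)).Adj ⟨a, P1 a h⟩ ⟨b, hb⟩ := hab
  exact (P4 ⟨a, P1 a h⟩).1 h ⟨b, hb⟩ ⟨hadj.toWalk, by simp⟩

theorem iff_of_succ {N : ℕ} {Q : ℕ → Prop} (h : ∀ p, p + 1 < N → (Q p ↔ Q (p + 1))) :
    ∀ p, p < N → (Q p ↔ Q 0) := by
  intro p
  induction p with
  | zero => simp
  | succ p ih => intro hp; rw [← h p hp]; exact ih (by omega)

theorem vnode_mem {G : SimpleGraph (Fin κ × Fin n)} {T : Set (Node G)}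
    (hT : IsPathsSolution G T) {i : Fin κ} {x : Fin n} {p q : ℕ}
    (hp : Valid G (PreNode.vnode i x p)) (hq : Valid G (PreNode.vnode i x q))
    (h : (⟨_, hp⟩ : Node G) ∈ T) : (⟨_, hq⟩ : Node G) ∈ T := by
  have key := iff_of_succ (N := n * (κ - 1))
    (Q := fun p => ∃ h : Valid G (PreNode.vnode i x p), (⟨_, h⟩ : Node G) ∈ T) (by
      intro p hp
      have hv : Valid G (PreNode.vnode i x p) := show p < n * (κ - 1) by omega
      have hv' : Valid G (PreNode.vnode i x (p + 1)) := hp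
      have hadj : (H G).Adj (⟨_, hv⟩ : Node G) ⟨_, hv'⟩ := by
        simp only [H, SimpleGraph.fromRel_adj]
        exact ⟨by simp, Or.inl (Or.inl ⟨i, x, p, rfl, rfl⟩)⟩
      constructor
      · rintro ⟨_, h⟩
        exact ⟨hv', mem_of_adj hT (Or.inl ⟨i, x, _, rfl⟩) hadj h⟩
      · rintro ⟨_, h⟩
        exact ⟨hv, mem_of_adj hT (Or.inl ⟨i, x, _, rfl⟩) hadj.symm h⟩)
  exact ((key q hq).2 ((key p hp).1 ⟨hp, h⟩)).2

theorem enode_mem {G : SimpleGraph (Fin κ × Fin n)} {T : Set (Node G)}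
    (hT : IsPathsSolution G T) {i j : Fin κ} {x y : Fin n} {p q : ℕ}
    (hp : Valid G (PreNode.enode i j x y p)) (hq : Valid G (PreNode.enode i j x y q))
    (h : (⟨_, hp⟩ : Node G) ∈ T) : (⟨_, hq⟩ : Node G) ∈ T := by
  have key := iff_of_succ (N := 2 * n)
    (Q := fun p => ∃ h : Valid G (PreNode.enode i j x y p), (⟨_, h⟩ : Node G) ∈ T) (by
      intro p hp'
      have hv : Valid G (PreNode.enode i j x y p) := ⟨hp.1, hp.2.1, by omega⟩
      have hv' : Valid G (PreNode.enode i j x y (p + 1)) := ⟨hp.1, hp.2.1, by omega⟩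
      have hadj : (H G).Adj (⟨_, hv⟩ : Node G) ⟨_, hv'⟩ := by
        simp only [H, SimpleGraph.fromRel_adj]
        exact ⟨by simp, Or.inl (Or.inr (Or.inr (Or.inr (Or.inr (Or.inl ⟨i, j, x, y, p, rfl, rfl⟩)))))⟩
      constructor
      · rintro ⟨_, h⟩
        exact ⟨hv', mem_of_adj hT (Or.inr ⟨i, j, x, y, _, rfl⟩) hadj h⟩
      · rintro ⟨_, h⟩
        exact ⟨hv, mem_of_adj hT (Or.inr ⟨i, j, x, y, _, rfl⟩) hadj.symm h⟩)
  exact ((key q hq.2.2).2 ((key p hp.2.2).1 ⟨hp, h⟩)).2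

/-- Common index type of the removed vertex nodes and of the chosen edge nodes. -/
abbrev Idx (κ n : ℕ) := {z : Fin κ × Fin κ // z.1 ≠ z.2} × Fin n

theorem card_idx : Fintype.card (Idx κ n) = n * (κ - 1) * κ := by
  have h : Fintype.card {z : Fin κ × Fin κ // z.1 ≠ z.2} = κ * κ - κ := by
    rw [Fintype.card_subtype]
    have : (Finset.univ.filter fun z : Fin κ × Fin κ => z.1 ≠ z.2) =
        (Finset.univ : Finset (Fin κ)).offDiag := by
      ext z; simp
    rw [this, Finset.offDiag_card]; simp
  rw [Fintype.card_prod, h, Fintype.card_fin, mul_assoc, Nat.sub_mul κ 1 κ, one_mul, mul_comm]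

/-- position of the group of class `j` in a vertex-gadget of class `i` -/
def grp (i j : Fin κ) : ℕ := if (j : ℕ) < i then j else j - 1

theorem classOfGroup_grp {i j : Fin κ} (h : i ≠ j) : classOfGroup i (grp i j) = j := by
  have : (i : ℕ) ≠ j := fun h' => h (Fin.ext h')
  unfold classOfGroup grp
  split_ifs <;> omega

theorem grp_lt {i j : Fin κ} (h : i ≠ j) : grp i j < κ - 1 := by
  have : (i : ℕ) ≠ j := fun h' => h (Fin.ext h')
  unfold grp
  split_ifs <;> omega

/-- The node of the vertex-gadgets selected by `f`, at a given index. -/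
def phi (f : Fin κ → Fin n) (z : Idx κ n) : PreNode κ n :=
  PreNode.vnode z.1.1.1 (f z.1.1.1) (n * grp z.1.1.1 z.1.1.2 + z.2)

/-- The node of the edge-gadgets selected by `X`, at a given index. -/
def psi (X : Fin κ → Fin κ → Fin n) (z : Idx κ n) : PreNode κ n :=
  if z.1.1.1 < z.1.1.2 then
    PreNode.enode z.1.1.1 z.1.1.2 (X z.1.1.1 z.1.1.2) (X z.1.1.2 z.1.1.1) z.2
  else
    PreNode.enode z.1.1.2 z.1.1.1 (X z.1.1.2 z.1.1.1) (X z.1.1.1 z.1.1.2) (n + z.2)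

theorem phi_valid (G : SimpleGraph (Fin κ × Fin n)) (f : Fin κ → Fin n) (z : Idx κ n) :
    Valid G (phi f z) := by
  obtain ⟨⟨⟨i, j⟩, hij⟩, q⟩ := z
  have h := grp_lt hij
  have hq := q.2
  show n * grp i j + q < n * (κ - 1)
  calc n * grp i j + q < n * (grp i j + 1) := by rw [mul_add]; omega
    _ ≤ _ := Nat.mul_le_mul_left _ h

theorem phi_inj (f : Fin κ → Fin n) : Function.Injective (phi f) := by
  rintro ⟨⟨⟨i, j⟩, hij⟩, q⟩ ⟨⟨⟨i', j'⟩, hij'⟩, q'⟩ h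
  simp only [phi, PreNode.vnode.injEq] at h
  obtain ⟨rfl, -, h⟩ := h
  have hn : 0 < n := lt_of_le_of_lt (Nat.zero_le _) q.2
  have h1 := congrArg (· / n) h
  have h2 := congrArg (· % n) h
  simp only [Nat.mul_add_div hn, Nat.div_eq_of_lt q.2, Nat.div_eq_of_lt q'.2, add_zero] at h1
  simp only [Nat.mul_add_mod, Nat.mod_eq_of_lt q.2, Nat.mod_eq_of_lt q'.2] at h2
  have h3 : j = j' := by
    apply Fin.ext
    rw [← classOfGroup_grp hij, ← classOfGroup_grp hij', h1]
  have h4 : q = q' := Fin.ext h2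
  subst h3 h4
  rfl

theorem psi_valid {G : SimpleGraph (Fin κ × Fin n)} {X : Fin κ → Fin κ → Fin n}
    (hX : ∀ i j, i ≠ j → G.Adj (i, X i j) (j, X j i)) (z : Idx κ n) :
    Valid G (psi X z) := by
  obtain ⟨⟨⟨i, j⟩, hij⟩, q⟩ := z
  have hq := q.2
  unfold psi
  split_ifs with h
  · exact ⟨h, hX _ _ hij, by dsimp only; omega⟩
  · exact ⟨lt_of_le_of_ne (not_lt.mp h) (Ne.symm hij), hX _ _ (Ne.symm hij), by dsimp only; omega⟩

theorem psi_inj (X : Fin κ → Fin κ → Fin n) : Function.Injective (psi X) := by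
  rintro ⟨⟨⟨i, j⟩, hij⟩, q⟩ ⟨⟨⟨i', j'⟩, hij'⟩, q'⟩ h
  have hq := q.2
  have hq' := q'.2
  unfold psi at h
  dsimp only at h
  split_ifs at h <;> simp only [PreNode.enode.injEq] at h <;> obtain ⟨rfl, rfl, -, -, h⟩ := h
  · have h4 : q = q' := Fin.ext h
    subst h4; rfl
  · omega
  · omega
  · have h4 : q = q' := Fin.ext (by omega)
    subst h4; rfl

/-- A two-step move from `phi z` to `psi z'` preserves the pair and the index/remainder side. -/
theorem walk_phi_psi {G : SimpleGraph (Fin κ × Fin n)} {f : Fin κ → Fin n}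
    {X : Fin κ → Fin κ → Fin n} {z z' : Idx κ n} {u v : Node G}
    (hu : u.1 = phi f z) (hv : v.1 = psi X z') (w : (H G).Walk u v) (hw : w.length = 2) :
    z'.1 = z.1 ∧ (z.2 ≤ f z.1.1.1 ↔ z'.2 ≤ X z.1.1.1 z.1.1.2) := by
  obtain ⟨⟨⟨i, j⟩, hij⟩, q⟩ := z
  obtain ⟨⟨⟨i', j'⟩, hij'⟩, q'⟩ := z'
  have hq := q.2
  have hq' := q'.2
  have hn : 0 < n := by omega
  unfold phi at hu
  unfold psi at hv
  dsimp only at hu hv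
  have e1 : (n * grp i j + (q : ℕ)) / n = grp i j := by
    rw [Nat.mul_add_div hn, Nat.div_eq_of_lt hq, add_zero]
  have e2 : (n * grp i j + (q : ℕ)) % n = q := by
    rw [Nat.mul_add_mod, Nat.mod_eq_of_lt hq]
  split_ifs at hv
  · obtain ⟨j₁, hj₁, h⟩ := walk_two hu hv w hw
    rw [e1, classOfGroup_grp hij] at hj₁
    have hj₂ := Fin.ext hj₁
    subst hj₂
    rw [e2] at h
    rcases h with ⟨-, rfl, rfl, h⟩ | ⟨h, -⟩
    · exact ⟨rfl, h⟩
    · omega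
  · obtain ⟨j₁, hj₁, h⟩ := walk_two hu hv w hw
    rw [e1, classOfGroup_grp hij] at hj₁
    have hj₂ := Fin.ext hj₁
    subst hj₂
    rw [e2] at h
    rcases h with ⟨h, -⟩ | ⟨-, rfl, rfl, h⟩
    · omega
    · rw [Nat.add_sub_cancel_left] at h
      exact ⟨rfl, h⟩

/-- An injection of `Fin n` that preserves initial segments. -/
theorem eq_of_inj {a b : Fin n} (s : Fin n → Fin n) (hs : Function.Injective s)
    (h : ∀ q, q ≤ a ↔ s q ≤ b) : a = b := by
  have h1 : (Finset.Iic a).card ≤ (Finset.Iic b).card :=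
    Finset.card_le_card_of_injOn s (fun q hq => by simpa [h q] using hq) hs.injOn
  have h2 : (Finset.Ioi a).card ≤ (Finset.Ioi b).card :=
    Finset.card_le_card_of_injOn s (fun q hq => by
      have : ¬ q ≤ a := by simpa using hq
      rw [h q] at this
      simpa using this) hs.injOn
  simp only [Fin.card_Iic, Fin.card_Ioi] at h1 h2
  apply Fin.ext
  omega

end PathsConstruction

open PathsConstruction in
/-- If in the graph of the paths construction some paths solution is reachable
from the initial configuration within `2n(κ−1)κ` token slides in the discovery
token sliding model, then the Multicolored Clique instance is a yes-instance. -/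
theorem mcc_yes_of_paths_solution {κ n : ℕ} (G : SimpleGraph (Fin κ × Fin n))
    (h : ∃ T : Set (Node G), IsPathsSolution G T ∧
      TokenDiscovery.Reachable (H G) (fun a : ↥(initialS G) => (a : Node G)) T
        (2 * n * (κ - 1) * κ)) :
    MCCYes G := by
  classical
  obtain ⟨T, hT, m, c, hm, hc0, hstep, hinj, hrange⟩ := h
  have := finite_node G
  have : Fintype ↥(initialS G) := Fintype.ofFinite _
  have hTcopy := hT
  obtain ⟨-, P1, P2, P3, -⟩ := hTcopy
  -- the unselected vertex gadgets
  have hf : ∀ i : Fin κ, ∃ x : Fin n, ∀ p (hp : Valid G (PreNode.vnode i x p)),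
      (⟨_, hp⟩ : Node G) ∉ T := by
    intro i
    obtain ⟨⟨w, hw⟩, ⟨x, p, hwp⟩, hwT⟩ := P2 i
    simp only at hwp
    subst hwp
    exact ⟨x, fun q hq hqT => hwT (vnode_mem hT hq hw hqT)⟩
  choose f hf using hf
  -- the selected edge gadgets
  have hg : ∀ i j : Fin κ, i < j → ∃ z : Fin n × Fin n, G.Adj (i, z.1) (j, z.2) ∧
      ∀ p (hp : Valid G (PreNode.enode i j z.1 z.2 p)), (⟨_, hp⟩ : Node G) ∈ T := by
    intro i j hij
    obtain ⟨⟨w, hw⟩, ⟨x, y, p, hwp⟩, hwT⟩ := P3 i j hij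
    simp only at hwp
    subst hwp
    exact ⟨(x, y), hw.2.1, fun q hq => enode_mem hT hw hq hwT⟩
  choose g hgadj hgT using hg
  let X : Fin κ → Fin κ → Fin n := fun i j =>
    if h : i < j then (g i j h).1 else if h : j < i then (g j i h).2 else f i
  have hX1 : ∀ i j (h : i < j), X i j = (g i j h).1 := fun i j h => by simp [X, h]
  have hX2 : ∀ i j (h : i < j), X j i = (g i j h).2 := fun i j h => by
    simp [X, h, not_lt.mpr h.le]
  have hXadj : ∀ i j, i ≠ j → G.Adj (i, X i j) (j, X j i) := by
    intro i j hij
    rcases lt_or_gt_of_ne hij with h | h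
    · rw [hX1 i j h, hX2 i j h]; exact hgadj i j h
    · rw [hX1 j i h, hX2 j i h]; exact (hgadj j i h).symm
  let φ : Idx κ n → ↥(initialS G) := fun z => ⟨⟨phi f z, phi_valid G f z⟩, _, _, _, rfl⟩
  let ψ : Idx κ n → Node G := fun z => ⟨psi X z, psi_valid hXadj z⟩
  have hφ : Function.Injective φ := fun a b h =>
    phi_inj f (congrArg (fun u : ↥(initialS G) => u.1.1) h)
  have hψ : Function.Injective ψ := fun a b h => psi_inj X (congrArg Subtype.val h)
  have hφT : ∀ z, (φ z : Node G) ∉ T := fun z => hf _ _ _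
  have hψT : ∀ z, ψ z ∈ T := by
    intro z
    have hv := psi_valid hXadj z
    have : ∀ w (hw : Valid G w), w = psi X z → (⟨w, hw⟩ : Node G) ∈ T := by
      intro w hw hwz
      unfold psi at hwz
      split_ifs at hwz with h
      · subst hwz
        have := hgT _ _ h z.2
        rw [← hX1 _ _ h, ← hX2 _ _ h] at this
        exact this hw
      · have h' : z.1.1.2 < z.1.1.1 := lt_of_le_of_ne (not_lt.mp h) (Ne.symm z.1.2)
        subst hwz
        have := hgT _ _ h' (n + z.2)
        rw [← hX1 _ _ h', ← hX2 _ _ h'] at this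
        exact this hw
    exact this _ hv rfl
  have hψE : ∀ z, IsE (ψ z) := by
    intro z
    show ∃ i j x y p, psi X z = PreNode.enode i j x y p
    unfold psi
    split_ifs
    · exact ⟨_, _, _, _, _, rfl⟩
    · exact ⟨_, _, _, _, _, rfl⟩
  obtain ⟨l, hl, hw⟩ := exists_lengths (H G) c m hstep
  rw [hc0] at hw
  let M : Finset ↥(initialS G) := Finset.univ.filter fun a => IsE (c m a)
  have hMmem : ∀ a, a ∈ M ↔ IsE (c m a) := fun a => by simp [M]
  have hM2 : ∀ a ∈ M, 2 ≤ l a := by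
    intro a ha
    obtain ⟨w, hwl⟩ := hw a
    rw [← hwl]
    exact two_le_length a.2 ((hMmem a).1 ha) w
  -- preimages of the chosen edge nodes
  have hα : ∀ z, ∃ a, c m a = ψ z := fun z => by
    have := hψT z
    rw [← hrange] at this
    exact this
  choose α hα using hα
  have hαinj : Function.Injective α := fun a b h => hψ (by rw [← hα a, ← hα b, h])
  have hαM : Finset.univ.image α ⊆ M := by
    intro a ha
    obtain ⟨z, -, rfl⟩ := Finset.mem_image.1 ha
    rw [hMmem, hα]
    exact hψE z
  have hαcard : (Finset.univ.image α).card = n * (κ - 1) * κ := by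
    rw [Finset.card_image_of_injective _ hαinj, Finset.card_univ, card_idx]
  have hMcard := Finset.card_le_card hαM
  rw [hαcard] at hMcard
  have hsum : ∑ a ∈ M, l a + ∑ a ∈ Mᶜ, l a = m := by rw [Finset.sum_add_sum_compl, hl]
  have hsumM : M.card * 2 ≤ ∑ a ∈ M, l a := by
    have := Finset.card_nsmul_le_sum M l 2 hM2
    simpa using this
  have hm' : m ≤ 2 * (n * (κ - 1) * κ) := by
    refine hm.trans (le_of_eq ?_)
    ring
  have hMle : M.card ≤ n * (κ - 1) * κ := by omega
  have hMeq : Finset.univ.image α = M :=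
    Finset.eq_of_subset_of_card_le hαM (by rw [hαcard]; exact hMle)
  have hcompl : ∑ a ∈ Mᶜ, l a = 0 := by omega
  have hsumM' : ∑ a ∈ M, l a = ∑ a ∈ M, 2 := by
    rw [Finset.sum_const, smul_eq_mul]; omega
  have hl0 : ∀ a, a ∉ M → l a = 0 := fun a ha =>
    Finset.sum_eq_zero_iff.1 hcompl a (Finset.mem_compl.2 ha)
  have hl2 : ∀ a ∈ M, l a = 2 := fun a ha =>
    (((Finset.sum_eq_sum_iff_of_le hM2).1 hsumM'.symm) a ha).symm
  have hφM : ∀ z, φ z ∈ M := by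
    intro z
    by_contra hz
    obtain ⟨w, hwl⟩ := hw (φ z)
    rw [hl0 _ hz] at hwl
    have := SimpleGraph.Walk.eq_of_length_eq_zero hwl
    apply hφT z
    rw [← hrange]
    exact ⟨φ z, this.symm⟩
  have hσ : ∀ z, ∃ z', α z' = φ z := by
    intro z
    have := hφM z
    rw [← hMeq] at this
    obtain ⟨z', -, h⟩ := Finset.mem_image.1 this
    exact ⟨z', h⟩
  choose σ hσ using hσ
  have hσinj : Function.Injective σ := fun a b h => hφ (by rw [← hσ a, ← hσ b, h])
  have hkey : ∀ z, (σ z).1 = z.1 ∧ (z.2 ≤ f z.1.1.1 ↔ (σ z).2 ≤ X z.1.1.1 z.1.1.2) := by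
    intro z
    obtain ⟨w, hwl⟩ := hw (φ z)
    rw [hl2 _ (hφM z)] at hwl
    have hv : c m (φ z) = ψ (σ z) := by rw [← hσ z, hα]
    exact walk_phi_psi (u := (φ z).1) (v := c m (φ z)) rfl (by rw [hv]) w hwl
  have hfX : ∀ i j, i ≠ j → f i = X i j := by
    intro i j hij
    refine eq_of_inj (fun q => (σ (⟨(i, j), hij⟩, q)).2) ?_ (fun q => (hkey (⟨(i, j), hij⟩, q)).2)
    intro q q' h
    have : σ (⟨(i, j), hij⟩, q) = σ (⟨(i, j), hij⟩, q') :=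
      Prod.ext ((hkey (⟨(i, j), hij⟩, q)).1.trans (hkey (⟨(i, j), hij⟩, q')).1.symm) h
    exact (Prod.mk.inj (hσinj this)).2
  refine ⟨f, fun i j hij => ?_⟩
  rw [hfX i j hij, hfX j i hij.symm]
  exact hXadj i j hij
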